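/- For every permutation w ∈ S_n, the Newton polytope of the Schubert polynomial 𝔖_w equals the Minkowski sum of Schubert matroid polytopes Σ_{j=1}^n P(SM_n(D(w)_j)), where D(w)_j = {i : (i,j) ∈ D(w)} are the columns of the Rothe diagram of w. -/

import Mathlib

open Finset MvPolynomial Pointwise

/-- `DomLE R S`: `R` and `S` have the same cardinality and, for each `k`, the `k`-th least
element of `R` does not exceed the `k`-th least element of `S`.  The bases of the Schubert
matroid `SM_n(S)` are exactly the `B` with `DomLE B S`. -/
def DomLE {α : Type*} [LinearOrder α] (R S : Finset α) : Prop :=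
  R.card = S.card ∧
    ∀ (k : ℕ) (hR : k < (R.sort (· ≤ ·)).length) (hS : k < (S.sort (· ≤ ·)).length),
      (R.sort (· ≤ ·)).get ⟨k, hR⟩ ≤ (S.sort (· ≤ ·)).get ⟨k, hS⟩

/-- Indicator vector `ζ^B ∈ {0,1}^n ⊆ ℝ^n` of a subset `B ⊆ [n]`. -/
def indVec {n : ℕ} (B : Finset (Fin n)) : Fin n → ℝ := fun i => if i ∈ B then 1 else 0

/-- Matroid polytope `P(SM_n(S))` of the Schubert matroid `SM_n(S)`: the convex hull in
`ℝ^n` of the indicator vectors of its bases, i.e. of the `B` with `B ≤ S`. -/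
def smPolytope {n : ℕ} (S : Finset (Fin n)) : Set (Fin n → ℝ) :=
  convexHull ℝ {x | ∃ B : Finset (Fin n), DomLE B S ∧ x = indVec B}

/-- Auxiliary greedy matching count for a parenthesis word (`true` = '(', `false` = ')'),
given the current number of unmatched open parentheses. -/
def matchedPairsAux : List Bool → ℕ → ℕ
  | [], _ => 0
  | true :: rest, o => matchedPairsAux rest (o + 1)
  | false :: rest, 0 => matchedPairsAux rest 0
  | false :: rest, o + 1 => matchedPairsAux rest o + 1

/-- The number of paired `()`'s in a parenthesis word (`true` = '(', `false` = ')'). -/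
def matchedPairs (w : List Bool) : ℕ := matchedPairsAux w 0

/-- Column `j` of a diagram `D ⊆ [n]²`: the set `D_j = {i : (i,j) ∈ D}`. -/
def colSet {n : ℕ} (D : Finset (Fin n × Fin n)) (j : Fin n) : Finset (Fin n) :=
  Finset.univ.filter fun i => (i, j) ∈ D

/-- The parenthesis part of `word_{j,I}(D)`: reading rows `i` from top to bottom, record
'(' (= `true`) if `(i,j) ∉ D` and `i ∈ I`, and ')' (= `false`) if `(i,j) ∈ D` and `i ∉ I`.
(The `⋆`'s, at positions with `(i,j) ∈ D` and `i ∈ I`, play no role in the matching.) -/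
def colWord {n : ℕ} (D : Finset (Fin n × Fin n)) (j : Fin n) (I : Finset (Fin n)) :
    List Bool :=
  (List.finRange n).filterMap fun i =>
    if (i, j) ∈ D then (if i ∈ I then none else some false)
    else (if i ∈ I then some true else none)

/-- `θ_D^j(I)`: the number of paired `()`'s plus the number of `⋆`'s in `word_{j,I}(D)`. -/
def thetaCol {n : ℕ} (D : Finset (Fin n × Fin n)) (j : Fin n) (I : Finset (Fin n)) : ℕ :=
  matchedPairs (colWord D j I) + (colSet D j ∩ I).card

/-- `θ_D(I) = Σ_{j=1}^n θ_D^j(I)`. -/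
def theta {n : ℕ} (D : Finset (Fin n × Fin n)) (I : Finset (Fin n)) : ℕ :=
  ∑ j : Fin n, thetaCol D j I

/-- The Newton polytope of a multivariate polynomial: the convex hull of the exponent
vectors of the monomials appearing with nonzero coefficient. -/
def newtonPolytope {σ : Type*} (f : MvPolynomial σ ℤ) : Set (σ → ℝ) :=
  convexHull ℝ ((fun (d : σ →₀ ℕ) (i : σ) => ((d i : ℕ) : ℝ)) '' ↑f.support)

/-- The Rothe diagram `D(w) = {(i,j) : w(i) > j, w⁻¹(j) > i}` of a permutation `w ∈ S_n`. -/
def rothe {n : ℕ} (w : Equiv.Perm (Fin n)) : Finset (Fin n × Fin n) :=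
  Finset.univ.filter fun p => p.2 < w p.1 ∧ p.1 < w⁻¹ p.2

/-!
Let `i` be the first position at which `w` differs from the decreasing word. The cotransition
formula says that `X i * 𝔖_w` is the sum of the polynomials `𝔖_{w'}` over the Bruhat covers
`w' = w * swap i j` with `i < j`. It is a monomial identity when the longest permutation is the
only cover of `w`, and divided differences carry it to the other `w`. Passing from `w` to such a
`w'` adds `i` to one column of the Rothe diagram and replaces an entry by the smaller entry `i` in
some others.

By induction on `w` the coefficients are nonnegative, and every exponent vector is a sum of
indicator vectors of bases, one for each column. Conversely, fix a generic weight and take the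
optimal basis of each column. For a suitable cover `w'`, adding `i` to one of these bases gives the
optimal bases for `w'`, so by induction the sum of the indicator vectors is an exponent vector of
`𝔖_w`. Hence every linear functional, after breaking ties, attains its maximum over the Minkowski
sum at a point of the Newton polytope, and the two polytopes agree.
-/

section Dominance

variable {α : Type*} [LinearOrder α]

theorem domLE_iff_orderEmbOfFin_le {R S : Finset α} :
    DomLE R S ↔ ∃ h : #R = #S, ∀ k, R.orderEmbOfFin h k ≤ S.orderEmbOfFin rfl k := by
  simp only [orderEmbOfFin_apply]
  refine ⟨fun ⟨h, hle⟩ => ⟨h, fun k => hle k _ _⟩, fun ⟨h, hle⟩ => ⟨h, fun k _ hS => ?_⟩⟩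
  exact hle ⟨k, length_sort (s := S) (· ≤ ·) ▸ hS⟩

theorem card_inter_eq_card_filter_orderEmbOfFin {R : Finset α} {m : ℕ} (h : #R = m)
    (L : Finset α) : #(R ∩ L) = #{k | R.orderEmbOfFin h k ∈ L} := by
  conv_lhs => rw [← map_orderEmbOfFin_univ R h, ← filter_mem_eq_inter, filter_map, card_map]
  rfl

theorem card_insert_inter {R : Finset α} {p : α} (hp : p ∉ R) (L : Finset α) :
    #(insert p R ∩ L) = #(R ∩ L) + if p ∈ L then 1 else 0 := by
  split_ifs with h
  · rw [insert_inter_of_mem h, card_insert_of_notMem fun hpR => hp (mem_inter.mp hpR).1]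
  · rw [insert_inter_of_notMem h, add_zero]

theorem card_erase_inter_add {R : Finset α} {q : α} (hq : q ∈ R) (L : Finset α) :
    #(R.erase q ∩ L) + (if q ∈ L then 1 else 0) = #(R ∩ L) := by
  rw [← card_insert_inter (notMem_erase q R), insert_erase hq]

theorem card_insert_erase {R : Finset α} {p q : α} (hp : p ∉ R) (hq : q ∈ R) :
    #(insert p (R.erase q)) = #R := by
  rw [card_insert_of_notMem fun h => hp (mem_of_mem_erase h), card_erase_add_one hq]

theorem card_insert_erase_inter_add {R : Finset α} {p q : α} (hp : p ∉ R) (hq : q ∈ R)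
    (L : Finset α) : #(insert p (R.erase q) ∩ L) + (if q ∈ L then 1 else 0) =
      #(R ∩ L) + if p ∈ L then 1 else 0 := by
  rw [card_insert_inter fun h => hp (mem_of_mem_erase h), add_right_comm,
    card_erase_inter_add hq]

theorem subset_of_isLowerSet_of_card_le {K L : Finset α} (hK : IsLowerSet (K : Set α))
    (hL : IsLowerSet (L : Set α)) (hcard : #K ≤ #L) : K ⊆ L := by
  rcases hK.total hL with hKL | hLK
  · exact coe_subset.mp hKL
  · exact (eq_of_subset_of_card_le (coe_subset.mp hLK) hcard).superset

variable {B R S : Finset α}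

theorem DomLE.card_eq (h : DomLE R S) : #R = #S := h.1

protected theorem DomLE.refl (S : Finset α) : DomLE S S := ⟨rfl, fun _ _ _ => le_rfl⟩

variable [Finite α]

theorem domLE_iff_card_inter_le :
    DomLE R S ↔ #R = #S ∧ ∀ L : Finset α, IsLowerSet (L : Set α) → #(S ∩ L) ≤ #(R ∩ L) := by
  have := Fintype.ofFinite α
  rw [domLE_iff_orderEmbOfFin_le]
  constructor
  · refine fun ⟨h, hle⟩ => ⟨h, fun L hL => ?_⟩
    rw [card_inter_eq_card_filter_orderEmbOfFin rfl, card_inter_eq_card_filter_orderEmbOfFin h]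
    exact card_le_card (monotone_filter_right _ fun k _ hk => hL (hle k) hk)
  · refine fun ⟨h, hcard⟩ => ⟨h, fun k => ?_⟩
    by_contra! hlt
    let L : Finset α := {x | x ≤ S.orderEmbOfFin rfl k}
    have mem_L {x : α} : x ∈ L ↔ x ≤ S.orderEmbOfFin rfl k := by simp [L]
    have hL : IsLowerSet (L : Set α) := fun a b hba ha =>
      mem_L.mpr (hba.trans (mem_L.mp ha))
    have hS : #(Iic k) ≤ #(S ∩ L) := by
      rw [card_inter_eq_card_filter_orderEmbOfFin rfl]
      exact card_le_card fun l hl => by simpa [mem_L] using hl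
    have hR : #(R ∩ L) ≤ #(Iio k) := by
      rw [card_inter_eq_card_filter_orderEmbOfFin h]
      refine card_le_card fun l hl => mem_Iio.mpr ?_
      exact (R.orderEmbOfFin h).lt_iff_lt.mp ((mem_L.mp (mem_filter.mp hl).2).trans_lt hlt)
    have := hS.trans ((hcard L hL).trans hR)
    rw [Fin.card_Iic, Fin.card_Iio] at this
    omega

theorem domLE_insert_erase {p q : α} (hp : p ∉ R) (hq : q ∈ R) (hpq : p ≤ q) :
    DomLE (insert p (R.erase q)) R := by
  refine domLE_iff_card_inter_le.mpr ⟨card_insert_erase hp hq, fun L hL => ?_⟩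
  have hcount := card_insert_erase_inter_add hp hq L
  have hmem : q ∈ L → p ∈ L := fun h => hL hpq h
  grind

namespace DomLE

theorem card_inter_le (h : DomLE R S) {L : Finset α} (hL : IsLowerSet (L : Set α)) :
    #(S ∩ L) ≤ #(R ∩ L) :=
  (domLE_iff_card_inter_le.mp h).2 L hL

protected theorem trans (h₁ : DomLE B R) (h₂ : DomLE R S) : DomLE B S :=
  domLE_iff_card_inter_le.mpr ⟨h₁.card_eq.trans h₂.card_eq,
    fun _ hL => (h₂.card_inter_le hL).trans (h₁.card_inter_le hL)⟩

theorem subset_of_isLowerSet (h : DomLE B S) {L : Finset α} (hL : IsLowerSet (L : Set α))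
    (hSL : S ⊆ L) : B ⊆ L := by
  have hcard := h.card_inter_le hL
  rw [inter_eq_left.mpr hSL, ← h.card_eq] at hcard
  exact inter_eq_left.mp (eq_of_subset_of_card_le inter_subset_left hcard)

theorem isLowerSet_subset (h : DomLE B S) {L : Finset α} (hL : IsLowerSet (L : Set α))
    (hLS : L ⊆ S) : L ⊆ B := by
  have hcard := h.card_inter_le hL
  rw [inter_eq_right.mpr hLS] at hcard
  exact inter_eq_right.mp (eq_of_subset_of_card_le inter_subset_right hcard)

theorem eq_of_isLowerSet (h : DomLE B S) (hS : IsLowerSet (S : Set α)) : B = S :=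
  (h.subset_of_isLowerSet hS Subset.rfl).antisymm (h.isLowerSet_subset hS Subset.rfl)

protected theorem insert {i : α} (h : DomLE B S) (hB : i ∉ B) (hS : i ∉ S) :
    DomLE (insert i B) (insert i S) := by
  refine domLE_iff_card_inter_le.mpr ⟨?_, fun L hL => ?_⟩
  · rw [card_insert_of_notMem hB, card_insert_of_notMem hS, h.card_eq]
  · rw [card_insert_inter hB, card_insert_inter hS]
    exact Nat.add_le_add_right (h.card_inter_le hL) _

theorem mem_of_insert {i : α} (h : DomLE B (insert i S)) (hlt : ∀ x < i, x ∈ S) : i ∈ B := by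
  have := Fintype.ofFinite α
  have hL : IsLowerSet (({x | x ≤ i} : Finset α) : Set α) := fun a b hba ha => by
    simpa using hba.trans (by simpa using ha)
  have hLS : ({x | x ≤ i} : Finset α) ⊆ insert i S := fun x hx => by
    rcases eq_or_lt_of_le (by simpa using hx : x ≤ i) with rfl | hx
    · exact mem_insert_self _ _
    · exact mem_insert_of_mem (hlt x hx)
  exact h.isLowerSet_subset hL hLS (by simp)

theorem erase_of_insert {i : α} (h : DomLE B (insert i S)) (hlt : ∀ x < i, x ∈ S)
    (hS : i ∉ S) : DomLE (B.erase i) S := by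
  have hB : i ∈ B := h.mem_of_insert hlt
  refine domLE_iff_card_inter_le.mpr ⟨?_, fun L hL => ?_⟩
  · rw [card_erase_of_mem hB, h.card_eq, card_insert_of_notMem hS, Nat.add_sub_cancel]
  by_cases hi : i ∈ L
  · have hcard := h.card_inter_le hL
    rw [card_insert_inter hS, ← card_erase_inter_add hB] at hcard
    exact Nat.le_of_add_le_add_right hcard
  · have hLi : ∀ x ∈ L, x < i := fun x hx => lt_of_not_ge fun hix => hi (hL hix hx)
    have hLB : L ⊆ B := h.isLowerSet_subset hL fun x hx => mem_insert_of_mem (hlt x (hLi x hx))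
    rw [inter_eq_right.mpr fun x hx => mem_erase.mpr ⟨(hLi x hx).ne, hLB hx⟩]
    exact card_le_card inter_subset_right

theorem insert_erase_of_not_tight {p q : α} (h : DomLE B S) (hp : p ∉ B) (hq : q ∈ B)
    (hstrict : ∀ L : Finset α, IsLowerSet (L : Set α) → q ∈ L → p ∉ L →
      #(B ∩ L) ≠ #(S ∩ L)) : DomLE (insert p (B.erase q)) S := by
  refine domLE_iff_card_inter_le.mpr ⟨(card_insert_erase hp hq).trans h.card_eq, fun L hL => ?_⟩
  have hcount := card_insert_erase_inter_add hp hq L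
  have hle := h.card_inter_le hL
  have hne := hstrict L hL
  grind

theorem exists_mem_notMem_of_tight {B' S' L₀ L₁ : Finset α} {p : α} (hS : S' ⊆ S)
    (h' : DomLE B' S') (h : DomLE B S) (hp' : p ∈ B') (hp : p ∉ B)
    (hL₀ : IsLowerSet (L₀ : Set α)) (hpL₀ : p ∈ L₀) (htight₀ : #(B' ∩ L₀) = #(S' ∩ L₀))
    (hL₁ : IsLowerSet (L₁ : Set α)) (hpL₁ : p ∉ L₁) (htight₁ : #(B ∩ L₁) = #(S ∩ L₁)) :
    ∃ q ∈ B, q ∉ B' ∧ q ∈ L₀ ∧ q ∉ L₁ := by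
  have hL : L₁ ⊆ L₀ := fun x hx =>
    hL₀ (le_of_not_ge fun hpx => hpL₁ (hL₁ hpx hx)) hpL₀
  have hsplit (T : Finset α) : #(T ∩ (L₀ \ L₁)) + #(T ∩ L₁) = #(T ∩ L₀) := by
    rw [← card_union_of_disjoint, ← inter_union_distrib_left, sdiff_union_of_subset hL]
    exact disjoint_sdiff_self_left.mono inter_subset_right inter_subset_right
  have hcard : #(B' ∩ (L₀ \ L₁)) ≤ #(B ∩ (L₀ \ L₁)) := by
    have hSS' : #(S' ∩ (L₀ \ L₁)) ≤ #(S ∩ (L₀ \ L₁)) :=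
      card_le_card (inter_subset_inter_right hS)
    have := h.card_inter_le hL₀
    have := h'.card_inter_le hL₁
    have := hsplit B
    have := hsplit S
    have := hsplit B'
    have := hsplit S'
    omega
  have hpD : p ∈ B' ∩ (L₀ \ L₁) := by simp [hp', hpL₀, hpL₁]
  have hnot : ¬ B ∩ (L₀ \ L₁) ⊆ B' ∩ (L₀ \ L₁) := fun hsub =>
    hp (mem_inter.mp ((eq_of_subset_of_card_le hsub hcard).superset hpD)).1
  obtain ⟨q, hq, hq'⟩ := not_subset.mp hnot
  simp only [mem_inter, mem_sdiff] at hq hq'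
  exact ⟨q, hq.1, fun h => hq' ⟨h, hq.2⟩, hq.2⟩

theorem exists_exchange {B' S' : Finset α} {p : α} (hS : S' ⊆ S) (h' : DomLE B' S')
    (h : DomLE B S) (hp' : p ∈ B') (hp : p ∉ B) :
    ∃ q ∈ B, q ∉ B' ∧ DomLE (insert p (B.erase q)) S ∧ DomLE (insert q (B'.erase p)) S' := by
  have := Fintype.ofFinite α
  -- A lower set is tight for `B` if `DomLE B S` holds with equality there; an exchange is blocked
  -- only by a tight set. Every `q` between the extremal tight sets `L₁` and `L₀` avoids both kinds.
  obtain ⟨L₀, ⟨hL₀, hpL₀, htight₀⟩, hmin⟩ := Set.exists_min_image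
    {L : Finset α | IsLowerSet (L : Set α) ∧ p ∈ L ∧ #(B' ∩ L) = #(S' ∩ L)} card
    (Set.toFinite _) ⟨univ, by simpa using isLowerSet_univ, mem_univ p, by simpa using h'.card_eq⟩
  obtain ⟨L₁, ⟨hL₁, hpL₁, htight₁⟩, hmax⟩ := Set.exists_max_image
    {L : Finset α | IsLowerSet (L : Set α) ∧ p ∉ L ∧ #(B ∩ L) = #(S ∩ L)} card
    (Set.toFinite _) ⟨∅, by simpa using isLowerSet_empty, by simp⟩
  obtain ⟨q, hq, hq', hqL₀, hqL₁⟩ := exists_mem_notMem_of_tight hS h' h hp' hp hL₀ hpL₀ htight₀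
    hL₁ hpL₁ htight₁
  refine ⟨q, hq, hq', h.insert_erase_of_not_tight hp hq fun L hL hqL hpL htight => ?_,
    h'.insert_erase_of_not_tight hq' hp' fun L hL hpL hqL htight => ?_⟩
  · exact hqL₁ (subset_of_isLowerSet_of_card_le hL hL₁ (hmax L ⟨hL, hpL, htight⟩) hqL)
  · exact hqL (subset_of_isLowerSet_of_card_le hL₀ hL (hmin L ⟨hL, hpL, htight⟩) hqL₀)

end DomLE

end Dominance

section OptimalBasis

variable {α Γ : Type*} [LinearOrder α] [AddCommMonoid Γ] [LinearOrder Γ]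

/-- A basis of the Schubert matroid of `S` of maximal total weight with respect to `v`. -/
def IsOptimalBasis (v : α → Γ) (S B : Finset α) : Prop :=
  DomLE B S ∧ ∀ B', DomLE B' S → ∑ x ∈ B', v x ≤ ∑ x ∈ B, v x

theorem exists_isOptimalBasis [Finite α] (v : α → Γ) (S : Finset α) :
    ∃ B, IsOptimalBasis v S B :=
  Set.exists_max_image {B | DomLE B S} (fun B => ∑ x ∈ B, v x) (Set.toFinite _) ⟨S, .refl S⟩

namespace IsOptimalBasis

variable [IsOrderedCancelAddMonoid Γ] {v : α → Γ} {S B : Finset α}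

theorem le_of_domLE_insert_erase {p q : α} (h : IsOptimalBasis v S B) (hp : p ∉ B) (hq : q ∈ B)
    (hpq : DomLE (insert p (B.erase q)) S) : v p ≤ v q := by
  have hle := h.2 _ hpq
  rw [sum_insert fun h => hp (mem_of_mem_erase h), ← add_sum_erase B v hq] at hle
  exact le_of_add_le_add_right hle

variable [Finite α]

theorem subset {S' B' : Finset α} (hv : v.Injective) (h' : IsOptimalBasis v S' B')
    (h : IsOptimalBasis v S B) (hS : S' ⊆ S) : B' ⊆ B := by
  intro p hp'
  by_contra hp
  obtain ⟨q, hq, hq', hins, hins'⟩ := DomLE.exists_exchange hS h'.1 h.1 hp' hp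
  have hpq : v p = v q := (h.le_of_domLE_insert_erase hp hq hins).antisymm
    (h'.le_of_domLE_insert_erase hq' hp' hins')
  exact hp (hv hpq ▸ hq)

protected theorem insert {i : α} (h : IsOptimalBasis v S B) (hlt : ∀ x < i, x ∈ S) (hS : i ∉ S)
    (hB : i ∉ B) : IsOptimalBasis v (insert i S) (insert i B) := by
  refine ⟨h.1.insert hB hS, fun B' hB' => ?_⟩
  rw [sum_insert hB, ← add_sum_erase B' v (hB'.mem_of_insert hlt)]
  exact add_le_add_right (h.2 _ (hB'.erase_of_insert hlt hS)) _

theorem insert_erase {i j : α} {B₀ : Finset α} (hv : v.Injective) (h : IsOptimalBasis v S B)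
    (hS : i ∉ S) (hB : i ∈ B) (hij : i < j) (hj : j ∈ S)
    (h₀ : IsOptimalBasis v {x ∈ S | x < j} B₀) (hB₀ : i ∉ B₀) :
    IsOptimalBasis v (insert i (S.erase j)) B := by
  refine ⟨domLE_iff_card_inter_le.mpr ⟨?_, fun L hL => ?_⟩,
    fun B' hB' => h.2 _ (hB'.trans (domLE_insert_erase hS hj hij.le))⟩
  · rw [card_insert_erase hS hj, h.1.card_eq]
  suffices i ∈ L → j ∉ L → #(S ∩ L) < #(B ∩ L) by
    have hcount := card_insert_erase_inter_add hS hj L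
    have hle := h.1.card_inter_le hL
    have hmem : j ∈ L → i ∈ L := fun hjL => hL hij.le hjL
    grind
  intro hiL hjL
  -- `A` lies below `j`, hence inside `B₀`, so the element `i` of `B` is not in `A`.
  obtain ⟨A, hA⟩ := exists_isOptimalBasis v (S ∩ L)
  have hAB : A ⊆ B := hA.subset hv h inter_subset_left
  have hAL : A ⊆ L := hA.1.subset_of_isLowerSet hL inter_subset_right
  have hAB₀ : A ⊆ B₀ := hA.subset hv h₀ fun x hx => by
    have hx := mem_inter.mp hx
    exact mem_filter.mpr ⟨hx.1, lt_of_not_ge fun hjx => hjL (hL hjx hx.2)⟩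
  calc #(S ∩ L) = #A := hA.1.card_eq.symm
    _ < #(insert i A) := by rw [card_insert_of_notMem fun hi => hB₀ (hAB₀ hi)]; omega
    _ ≤ #(B ∩ L) := card_le_card <|
      insert_subset (mem_inter.mpr ⟨hB, hiL⟩) (subset_inter hAB hAL)

end IsOptimalBasis

end OptimalBasis

section RotheColumns

variable {α : Type*} [LinearOrder α] {w : Equiv.Perm α} {i j k m : α}

/-- Each position `k < i` carries a larger value than all positions after `k`. This is the
condition on `i` under which the cotransition formula multiplies by `X i`. -/
def IsReversedBefore (w : Equiv.Perm α) (i : α) : Prop := ∀ k < i, ∀ x, k < x → w x < w k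

theorem exists_isReversedBefore [WellFoundedLT α] (hw : ¬ StrictAnti w) :
    ∃ i, IsReversedBefore w i ∧ ∃ j, i < j ∧ w i < w j := by
  have hne : {i | ∃ j, i < j ∧ w i < w j}.Nonempty := by
    by_contra! hempty
    refine hw fun a b hab => lt_of_le_of_ne (le_of_not_gt fun hlt => ?_) (w.injective.ne hab.ne')
    exact (hempty.subset ⟨b, hab, hlt⟩ : a ∈ (∅ : Set α))
  obtain ⟨i, hi, hmin⟩ := wellFounded_lt.has_min _ hne
  refine ⟨i, fun k hki x hkx => ?_, hi⟩
  exact lt_of_le_of_ne (le_of_not_gt fun hlt => hmin k ⟨x, hkx, hlt⟩ hki) (w.injective.ne hkx.ne')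

variable [Fintype α]

/-- Column `w m` of the Rothe diagram of `w`, indexed by the position `m` of its value, so that
multiplying `w` by a transposition on the right changes few columns. -/
def rotheCol (w : Equiv.Perm α) (m : α) : Finset α := {k | k < m ∧ w m < w k}

/-- The positions `j > i` for which `w * swap i j` covers `w` in the Bruhat order. -/
def bruhatCovers (w : Equiv.Perm α) (i : α) : Finset α :=
  {j | i < j ∧ w i < w j ∧ ∀ l, i < l → l < j → ¬ (w i < w l ∧ w l < w j)}

theorem mem_rotheCol : k ∈ rotheCol w m ↔ k < m ∧ w m < w k := by simp [rotheCol]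

theorem mem_bruhatCovers : j ∈ bruhatCovers w i ↔
    i < j ∧ w i < w j ∧ ∀ l, i < l → l < j → ¬ (w i < w l ∧ w l < w j) := by
  simp [bruhatCovers]

theorem lt_or_lt_of_mem_bruhatCovers (hj : j ∈ bruhatCovers w i) (hik : i < k) (hkj : k < j) :
    w k < w i ∨ w j < w k := by
  have hnot := (mem_bruhatCovers.mp hj).2.2 k hik hkj
  have hi := w.injective.ne hik.ne
  have hj := w.injective.ne hkj.ne
  grind

theorem IsReversedBefore.mem_rotheCol_of_lt (hw : IsReversedBefore w i) (him : i < m)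
    (hki : k < i) : k ∈ rotheCol w m :=
  mem_rotheCol.mpr ⟨hki.trans him, hw k hki m (hki.trans him)⟩

theorem notMem_rotheCol_of_lt (h : w i < w m) : i ∉ rotheCol w m := fun hi =>
  (mem_rotheCol.mp hi).2.asymm h

theorem IsReversedBefore.lt_of_between (hw : IsReversedBefore w i) (hj : j ∈ bruhatCovers w i)
    (him : w i < w m) (hmj : w m < w j) : j < m := by
  obtain ⟨hij, -, hcover⟩ := mem_bruhatCovers.mp hj
  have hlt : i < m := by
    rcases lt_trichotomy m i with h | rfl | h
    · exact absurd (hw m h j (h.trans hij)) hmj.asymm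
    · exact absurd him (lt_irrefl _)
    · exact h
  rcases lt_trichotomy j m with h | rfl | h
  · exact h
  · exact absurd hmj (lt_irrefl _)
  · exact absurd ⟨him, hmj⟩ (hcover m hlt h)

theorem rotheCol_mul_swap_right (hw : IsReversedBefore w i) (hj : j ∈ bruhatCovers w i) :
    rotheCol (w * Equiv.swap i j) j = insert i (rotheCol w j) := by
  obtain ⟨hij, hlt, -⟩ := mem_bruhatCovers.mp hj
  ext k
  simp only [mem_insert, mem_rotheCol, Equiv.Perm.mul_apply, Equiv.swap_apply_right]
  have hbefore : k < i → w j < w k := fun hki => hw k hki j (hki.trans hij)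
  have hafter : i < k → k < j → w k < w i ∨ w j < w k := lt_or_lt_of_mem_bruhatCovers hj
  grind

theorem rotheCol_mul_swap_of_between (hw : IsReversedBefore w i) (hj : j ∈ bruhatCovers w i)
    (him : w i < w m) (hmj : w m < w j) :
    rotheCol (w * Equiv.swap i j) m = insert i ((rotheCol w m).erase j) := by
  have hjm : j < m := hw.lt_of_between hj him hmj
  have hij : i < j := (mem_bruhatCovers.mp hj).1
  ext k
  simp only [mem_insert, mem_erase, mem_rotheCol, Equiv.Perm.mul_apply]
  grind

theorem rotheCol_mul_swap_of_not_between (hw : IsReversedBefore w i) (hj : j ∈ bruhatCovers w i)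
    (hmj : m ≠ j) (hm : ¬ (w i < w m ∧ w m < w j)) :
    rotheCol (w * Equiv.swap i j) m = rotheCol w m := by
  obtain ⟨hij, hlt, -⟩ := mem_bruhatCovers.mp hj
  ext k
  simp only [mem_rotheCol, Equiv.Perm.mul_apply]
  rcases eq_or_ne m i with rfl | hmi
  · have hbefore : k < m → w j < w k := fun hki => hw k hki j (hki.trans hij)
    grind
  · have hne : w m ≠ w i ∧ w m ≠ w j := ⟨w.injective.ne hmi, w.injective.ne hmj⟩
    grind

theorem IsReversedBefore.filter_rotheCol_of_between (hw : IsReversedBefore w i)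
    (hj : j ∈ bruhatCovers w i) (him : w i < w m) (hmj : w m < w j) :
    {k ∈ rotheCol w m | k < j} = rotheCol w j := by
  have hjm : j < m := hw.lt_of_between hj him hmj
  have hij : i < j := (mem_bruhatCovers.mp hj).1
  ext k
  simp only [mem_filter, mem_rotheCol]
  have hbefore : k < i → w j < w k := fun hki => hw k hki j (hki.trans hij)
  have hafter : i < k → k < j → w k < w i ∨ w j < w k := lt_or_lt_of_mem_bruhatCovers hj
  grind

theorem IsReversedBefore.exists_rotheCol_eq (hw : IsReversedBefore w i)
    (hi : ∃ j, i < j ∧ w i < w j) :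
    ∃ j, i < j ∧ w i < w j ∧ rotheCol w j = ({k | k < i} : Finset α) := by
  obtain ⟨j, hij, hmax⟩ := Set.exists_max_image {j | i < j} w (Set.toFinite _)
    (hi.imp fun _ => And.left)
  have hlt : w i < w j := by
    obtain ⟨k, hik, hlt⟩ := hi
    exact hlt.trans_le (hmax k hik)
  refine ⟨j, hij, hlt, ?_⟩
  ext k
  simp only [mem_rotheCol, mem_filter, mem_univ, true_and]
  have hbefore : k < i → w j < w k := fun hki => hw k hki j (lt_trans hki hij)
  have hafter : i < k → w k ≤ w j := hmax k
  grind

variable {Γ : Type*} [AddCommMonoid Γ] [LinearOrder Γ] {v : α → Γ} {B : α → Finset α}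

theorem IsReversedBefore.exists_notMem_optimalBasis (hw : IsReversedBefore w i)
    (hi : ∃ j, i < j ∧ w i < w j) (hB : ∀ m, IsOptimalBasis v (rotheCol w m) (B m)) :
    ∃ j, i < j ∧ w i < w j ∧ i ∉ B j := by
  obtain ⟨j, hij, hlt, hcol⟩ := hw.exists_rotheCol_eq hi
  have hlower : IsLowerSet (rotheCol w j : Set α) := fun a b hba ha => by
    rw [hcol, coe_filter_univ] at ha ⊢
    exact hba.trans_lt ha
  refine ⟨j, hij, hlt, ?_⟩
  rw [(hB j).1.eq_of_isLowerSet hlower]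
  exact notMem_rotheCol_of_lt hlt

variable [IsOrderedCancelAddMonoid Γ]

theorem IsReversedBefore.exists_mem_bruhatCovers (hw : IsReversedBefore w i)
    (hi : ∃ j, i < j ∧ w i < w j) (hv : v.Injective)
    (hB : ∀ m, IsOptimalBasis v (rotheCol w m) (B m)) :
    ∃ j ∈ bruhatCovers w i, i ∉ B j ∧ ∀ m, w i < w m → w m < w j → i ∈ B m := by
  obtain ⟨j, ⟨hij, hlt, hiB⟩, hmin⟩ := Set.exists_min_image
    {j | i < j ∧ w i < w j ∧ i ∉ B j} w (Set.toFinite _) (hw.exists_notMem_optimalBasis hi hB)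
  have hmem (m : α) (him : w i < w m) (hmj : w m < w j) (hlt : i < m) : i ∈ B m := by
    by_contra hiBm
    exact (hmin m ⟨hlt, him, hiBm⟩).not_gt hmj
  have hj : j ∈ bruhatCovers w i := by
    refine mem_bruhatCovers.mpr ⟨hij, hlt, fun l hil hlj hbetween => ?_⟩
    obtain ⟨k, ⟨hik, hkj, hwik, hwkj⟩, hkmin⟩ := Set.exists_min_image
      {k | i < k ∧ k < j ∧ w i < w k ∧ w k < w j} id (Set.toFinite _) ⟨l, hil, hlj, hbetween⟩
    have hcol : rotheCol w k ⊆ rotheCol w j := fun x hx => by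
      obtain ⟨hxk, hwx⟩ := mem_rotheCol.mp hx
      refine mem_rotheCol.mpr ⟨hxk.trans hkj, ?_⟩
      rcases lt_trichotomy x i with hxi | rfl | hix
      · exact hw x hxi j (hxi.trans hij)
      · exact absurd hwx hwik.asymm
      · by_contra! hle
        have hwxj : w x < w j := hle.lt_of_ne (w.injective.ne (hxk.trans hkj).ne)
        exact (hkmin x ⟨hix, hxk.trans hkj, hwik.trans hwx, hwxj⟩).not_gt hxk
    exact hiB ((hB k).subset hv (hB j) hcol (hmem k hwik hwkj hik))
  exact ⟨j, hj, hiB, fun m him hmj => hmem m him hmj (hij.trans (hw.lt_of_between hj him hmj))⟩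

theorem IsReversedBefore.exists_isOptimalBasis_update (hw : IsReversedBefore w i)
    (hi : ∃ j, i < j ∧ w i < w j) (hv : v.Injective)
    (hB : ∀ m, IsOptimalBasis v (rotheCol w m) (B m)) :
    ∃ j ∈ bruhatCovers w i, i ∉ B j ∧ ∀ m, IsOptimalBasis v (rotheCol (w * Equiv.swap i j) m)
      (Function.update B j (insert i (B j)) m) := by
  obtain ⟨j, hj, hiB, hmem⟩ := hw.exists_mem_bruhatCovers hi hv hB
  obtain ⟨hij, hlt, -⟩ := mem_bruhatCovers.mp hj
  refine ⟨j, hj, hiB, fun m => ?_⟩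
  rcases eq_or_ne m j with rfl | hmj
  · rw [Function.update_self, rotheCol_mul_swap_right hw hj]
    exact (hB m).insert (fun x => hw.mem_rotheCol_of_lt hij) (notMem_rotheCol_of_lt hlt) hiB
  rw [Function.update_of_ne hmj]
  by_cases hbetween : w i < w m ∧ w m < w j
  · obtain ⟨him, hwmj⟩ := hbetween
    have hjm : j < m := hw.lt_of_between hj him hwmj
    rw [rotheCol_mul_swap_of_between hw hj him hwmj]
    refine (hB m).insert_erase hv (notMem_rotheCol_of_lt him) (hmem m him hwmj) hij
      (mem_rotheCol.mpr ⟨hjm, hwmj⟩) ?_ hiB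
    rw [hw.filter_rotheCol_of_between hj him hwmj]
    exact hB j
  · rw [rotheCol_mul_swap_of_not_between hw hj hmj hbetween]
    exact hB m

theorem IsReversedBefore.domLE_update_erase (hw : IsReversedBefore w i)
    (hj : j ∈ bruhatCovers w i)
    (hB : ∀ m, DomLE (B m) (rotheCol (w * Equiv.swap i j) m)) :
    i ∈ B j ∧ ∀ m, DomLE (Function.update B j ((B j).erase i) m) (rotheCol w m) := by
  obtain ⟨hij, hlt, -⟩ := mem_bruhatCovers.mp hj
  have hBj : DomLE (B j) (insert i (rotheCol w j)) := rotheCol_mul_swap_right hw hj ▸ hB j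
  have hmem : ∀ x < i, x ∈ rotheCol w j := fun x => hw.mem_rotheCol_of_lt hij
  refine ⟨hBj.mem_of_insert hmem, fun m => ?_⟩
  rcases eq_or_ne m j with rfl | hmj
  · rw [Function.update_self]
    exact hBj.erase_of_insert hmem (notMem_rotheCol_of_lt hlt)
  rw [Function.update_of_ne hmj]
  by_cases hbetween : w i < w m ∧ w m < w j
  · obtain ⟨him, hwmj⟩ := hbetween
    have hBm := rotheCol_mul_swap_of_between hw hj him hwmj ▸ hB m
    exact hBm.trans (domLE_insert_erase (notMem_rotheCol_of_lt him)
      (mem_rotheCol.mpr ⟨hw.lt_of_between hj him hwmj, hwmj⟩) hij.le)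
  · exact rotheCol_mul_swap_of_not_between hw hj hmj hbetween ▸ hB m

end RotheColumns

theorem rename_prod_X_pow {σ R : Type*} [Fintype σ] [CommSemiring R] (e : Equiv.Perm σ)
    (d : σ → ℕ) :
    rename e (∏ k, X k ^ d k : MvPolynomial σ R) = ∏ k, X k ^ d (e.symm k) := by
  rw [map_prod, ← Equiv.prod_comp e fun k => (X k ^ d (e.symm k) : MvPolynomial σ R)]
  simp only [map_pow, rename_X, Equiv.symm_apply_apply]

section DividedDifference

variable {σ R : Type*} [DecidableEq σ] [CommRing R] {i j k : σ} {f f' g g' : MvPolynomial σ R}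

/-- `g` is the divided difference `(f - s f) / (X i - X j)`, where `s` swaps `X i` and `X j`. -/
def IsDivDiff (i j : σ) (f g : MvPolynomial σ R) : Prop :=
  (X i - X j) * g = f - rename (Equiv.swap i j) f

theorem isDivDiff_zero_right_iff : IsDivDiff i j f 0 ↔ rename (Equiv.swap i j) f = f := by
  rw [IsDivDiff, mul_zero, eq_comm, sub_eq_zero, eq_comm]

namespace IsDivDiff

theorem sum {ι : Type*} {s : Finset ι} {f g : ι → MvPolynomial σ R}
    (h : ∀ a ∈ s, IsDivDiff i j (f a) (g a)) : IsDivDiff i j (∑ a ∈ s, f a) (∑ a ∈ s, g a) := by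
  rw [IsDivDiff, mul_sum, map_sum, ← sum_sub_distrib]
  exact sum_congr rfl h

theorem X_mul (h : IsDivDiff i j f g) (hi : k ≠ i) (hj : k ≠ j) :
    IsDivDiff i j (X k * f) (X k * g) := by
  rw [IsDivDiff, map_mul, rename_X, Equiv.swap_apply_of_ne_of_ne hi hj, ← mul_sub, ← h]
  ring

theorem X_right_mul (h : IsDivDiff i j f g) : IsDivDiff i j (X j * f) (X i * g - f) := by
  have h : (X i - X j) * g = f - rename (Equiv.swap i j) f := h
  rw [IsDivDiff, map_mul, rename_X, Equiv.swap_apply_right]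
  linear_combination X i * h

variable [IsDomain R]

theorem unique (h : IsDivDiff i j f g) (h' : IsDivDiff i j f g') (hij : i ≠ j) : g = g' := by
  have hX : (X i - X j : MvPolynomial σ R) ≠ 0 :=
    sub_ne_zero.mpr fun h => hij (X_injective h)
  exact mul_left_cancel₀ hX (h.trans h'.symm)

theorem isDivDiff_zero (h : IsDivDiff i j f g) (hij : i ≠ j) : IsDivDiff i j g 0 := by
  have hs := congrArg (rename (Equiv.swap i j)) h
  rw [map_mul, map_sub, map_sub, rename_X, rename_X, Equiv.swap_apply_left,
    Equiv.swap_apply_right, rename_rename, ← Equiv.coe_trans, Equiv.swap_swap, Equiv.coe_refl,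
    rename_id_apply] at hs
  have hg : IsDivDiff i j f (rename (Equiv.swap i j) g) := by
    rw [IsDivDiff]
    linear_combination -hs
  exact isDivDiff_zero_right_iff.mpr (hg.unique h hij)

end IsDivDiff

end DividedDifference

section BruhatCovers

variable {α : Type*} [LinearOrder α] {w : Equiv.Perm α} {i j k l : α}

theorem mul_swap_induction [Finite α] {P : Equiv.Perm α → Prop}
    (h : ∀ w, (∀ i j, i < j → w i < w j → P (w * Equiv.swap i j)) → P w) (w : Equiv.Perm α) :
    P w := by
  have : Finite (Lex (α → α)) := inferInstanceAs (Finite (α → α))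
  refine (InvImage.wf (fun u : Equiv.Perm α => toLex (u : α → α)) wellFounded_gt).induction w
    fun w ih => h w fun i j hij hlt => ih _ ?_
  have hdesc := Pi.lex_desc (f := (w * Equiv.swap i j : Equiv.Perm α)) hij.le (by simpa using hlt)
  rwa [← Equiv.Perm.coe_mul, mul_assoc, Equiv.swap_mul_self, mul_one] at hdesc

theorem IsReversedBefore.mul_swap (hw : IsReversedBefore w i) (hk : i ≤ k) (hl : i ≤ l) :
    IsReversedBefore (w * Equiv.swap k l) i := by
  intro x hxi y hxy
  have hfix : Equiv.swap k l x = x :=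
    Equiv.swap_apply_of_ne_of_ne (hxi.trans_le hk).ne (hxi.trans_le hl).ne
  rw [Equiv.Perm.mul_apply, Equiv.Perm.mul_apply, hfix]
  refine hw x hxi _ ?_
  grind

theorem IsReversedBefore.mul_swap_of_covBy (hw : IsReversedBefore w i) (hil : i ⋖ l)
    (hlt : w i < w l) (hmax : ∀ x, l < x → w x < w l) :
    IsReversedBefore (w * Equiv.swap i l) l := by
  intro x hxl y hxy
  obtain hxi | rfl := (hil.lt_iff_le_left.mp hxl).lt_or_eq
  · exact hw.mul_swap le_rfl hil.le x hxi y hxy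
  · obtain rfl | hly := (hil.lt_iff_le_right.mp hxy).eq_or_lt
    · simpa using hlt
    · simpa [Equiv.swap_apply_of_ne_of_ne hxy.ne' hly.ne'] using hmax y hly

variable [Fintype α]

theorem mem_bruhatCovers_iff_mul_swap (hik : i < k) (hkl : k ⋖ l) (hlt : w k < w l) :
    j ∈ bruhatCovers w i ↔ Equiv.swap k l j ∈ bruhatCovers (w * Equiv.swap k l) i ∧
      (w * Equiv.swap i j) k < (w * Equiv.swap i j) l := by
  have hltl (x : α) : x < l ↔ x ≤ k := hkl.lt_iff_le_left
  have hltk (x : α) : k < x ↔ l ≤ x := hkl.lt_iff_le_right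
  have hi : (w * Equiv.swap k l) i = w i := by 
    simp [Equiv.swap_apply_of_ne_of_ne hik.ne (hik.trans hkl.lt).ne]
  have hne : w k ≠ w i := w.injective.ne hik.ne'
  have hinv : Equiv.swap k l (Equiv.swap k l j) = j := by simp
  simp only [mem_bruhatCovers, hi, Equiv.Perm.mul_apply, hinv]
  constructor
  · rintro ⟨hij, hwij, hcover⟩
    refine ⟨⟨?_, hwij, fun x hix hxj hb => hcover (Equiv.swap k l x) ?_ ?_ hb⟩, ?_⟩
    all_goals grind
  · rintro ⟨⟨hij, hwij, hcover⟩, hasc⟩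
    refine ⟨?_, hwij, fun x hix hxj hb => hcover (Equiv.swap k l x) ?_ ?_ ?_⟩
    all_goals grind

theorem sum_bruhatCovers_mul_swap {M : Type*} [AddCommMonoid M] (F : α → M) (hik : i < k)
    (hkl : k ⋖ l) (hlt : w k < w l) :
    ∑ j ∈ bruhatCovers (w * Equiv.swap k l) i,
      (if (w * Equiv.swap i (Equiv.swap k l j)) k < (w * Equiv.swap i (Equiv.swap k l j)) l
        then F (Equiv.swap k l j) else 0) = ∑ j ∈ bruhatCovers w i, F j := by
  rw [← sum_filter]
  refine sum_equiv (Equiv.swap k l) (fun j => ?_) fun _ _ => rfl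
  rw [mem_bruhatCovers_iff_mul_swap hik hkl hlt, Equiv.swap_apply_self, mem_filter]

theorem bruhatCovers_eq_insert (hil : i ⋖ l) (hlt : w i < w l)
    (hmax : ∀ x, l < x → w x < w l) :
    bruhatCovers w i = insert l (bruhatCovers (w * Equiv.swap i l) l) := by
  have hltl (x : α) : i < x ↔ l ≤ x := hil.lt_iff_le_right
  have hlast {x : α} (hx : l < x) : Equiv.swap i l x = x :=
    Equiv.swap_apply_of_ne_of_ne (hil.lt.trans hx).ne' hx.ne'
  ext j
  simp only [mem_insert, mem_bruhatCovers, Equiv.Perm.mul_apply, Equiv.swap_apply_right]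
  grind

end BruhatCovers

section ExponentVector

variable {ι α : Type*} [Fintype ι] [DecidableEq α] {B : ι → Finset α} {c : ι} {i : α}

/-- The exponent vector of a choice of one basis in each column: the sum of the indicator
vectors of the sets `B c`, with natural number coordinates. -/
noncomputable def expVec (B : ι → Finset α) : α →₀ ℕ := ∑ c, ∑ x ∈ B c, Finsupp.single x 1

theorem expVec_apply (x : α) : expVec B x = #{c | x ∈ B c} := by
  simp [expVec, Finsupp.finsetSum_apply, Finsupp.single_apply]

variable [DecidableEq ι]

theorem expVec_eq_single_add_update_erase (hi : i ∈ B c) :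
    expVec B = Finsupp.single i 1 + expVec (Function.update B c ((B c).erase i)) := by
  have hrest : ∑ b ∈ univ.erase c, ∑ x ∈ Function.update B c ((B c).erase i) b,
      Finsupp.single x 1 = ∑ b ∈ univ.erase c, ∑ x ∈ B b, Finsupp.single x 1 :=
    sum_congr rfl fun b hb => by rw [Function.update_of_ne (ne_of_mem_erase hb)]
  rw [expVec, expVec, ← add_sum_erase univ _ (mem_univ c), ← add_sum_erase univ _ (mem_univ c),
    Function.update_self, hrest, ← add_sum_erase (B c) _ hi, add_assoc]

theorem expVec_update_insert (hi : i ∉ B c) :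
    expVec (Function.update B c (insert i (B c))) = Finsupp.single i 1 + expVec B := by
  rw [expVec_eq_single_add_update_erase (c := c) (i := i) (by simp), Function.update_self,
    erase_insert hi, Function.update_idem, Function.update_eq_self]

end ExponentVector

section Schubert

variable {n : ℕ}

/-- The recursive characterization of the Schubert polynomials: the value at the longest
permutation, and the divided differences at adjacent transpositions. -/
structure IsSchubertFamily (S : Equiv.Perm (Fin n) → MvPolynomial (Fin n) ℤ) : Prop where
  revPerm : S Fin.revPerm = ∏ i : Fin n, X i ^ (n - 1 - (i : ℕ))
  isDivDiff : ∀ w i j, i ⋖ j → w i < w j → IsDivDiff i j (S (w * Equiv.swap i j)) (S w)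

theorem eq_revPerm_of_strictAnti {w : Equiv.Perm (Fin n)} (hw : StrictAnti w) :
    w = Fin.revPerm := by
  have hmono : StrictMono (w ∘ Fin.rev) := hw.comp Fin.rev_strictAnti
  have hid : w ∘ Fin.rev = id := (hmono.range_inj strictMono_id).mp <| by
    rw [(w.surjective.comp Fin.rev_surjective).range_eq, Set.range_id]
  ext i
  simpa using congrArg Fin.val (congrFun hid (Fin.rev i))

theorem isLowerSet_rotheCol_revPerm (m : Fin n) :
    IsLowerSet (rotheCol Fin.revPerm m : Set (Fin n)) := by
  intro a b hba ha
  simp only [mem_coe, mem_rotheCol, Fin.revPerm_apply, Fin.rev_lt_rev, and_self] at ha ⊢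
  exact hba.trans_lt ha

@[elab_as_elim]
theorem bruhatCovers_induction {P : Equiv.Perm (Fin n) → Prop} (revPerm : P Fin.revPerm)
    (step : ∀ w i, IsReversedBefore w i → (∃ j, i < j ∧ w i < w j) →
      (∀ j ∈ bruhatCovers w i, P (w * Equiv.swap i j)) → P w)
    (w : Equiv.Perm (Fin n)) : P w := by
  induction w using mul_swap_induction with | h w ih
  by_cases hw : StrictAnti w
  · exact eq_revPerm_of_strictAnti hw ▸ revPerm
  · obtain ⟨i, hwi, hi⟩ := exists_isReversedBefore hw
    refine step w i hwi hi fun j hj => ?_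
    obtain ⟨hij, hlt, -⟩ := mem_bruhatCovers.mp hj
    exact ih i j hij hlt

namespace IsSchubertFamily

variable {S : Equiv.Perm (Fin n) → MvPolynomial (Fin n) ℤ} {w : Equiv.Perm (Fin n)}
  {i j k l : Fin n}

theorem isDivDiff_mul_swap (hS : IsSchubertFamily S) (hkl : k ⋖ l) :
    IsDivDiff k l (S (w * Equiv.swap k l)) (if w k < w l then S w else 0) := by
  split_ifs with h
  · exact hS.isDivDiff w k l hkl h
  · have hlt : w l < w k := (not_lt.mp h).lt_of_ne (w.injective.ne hkl.lt.ne')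
    have hdesc := hS.isDivDiff (w * Equiv.swap k l) k l hkl (by simpa using hlt)
    exact hdesc.isDivDiff_zero hkl.lt.ne

theorem isDivDiff_X_mul_revPerm (hS : IsSchubertFamily S) (hil : i ⋖ l) :
    IsDivDiff i l (X l * S Fin.revPerm) 0 := by
  have hX : (X l * S Fin.revPerm) =
      ∏ k : Fin n, X k ^ ((n - 1 - (k : ℕ)) + if k = l then 1 else 0) := by
    simp_rw [hS.revPerm, pow_add, prod_mul_distrib]
    simp [mul_comm]
  rw [isDivDiff_zero_right_iff, hX, rename_prod_X_pow]
  refine prod_congr rfl fun k _ => congrArg _ ?_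
  have hval : (i : ℕ) + 1 = l := Nat.covBy_iff_add_one_eq.mp (Fin.covBy_iff.mp hil)
  rw [Equiv.symm_swap]
  have := l.isLt
  grind

theorem X_mul_eq_sum_bruhatCovers_of_lt (hS : IsSchubertFamily S) (hik : i < k) (hkl : k ⋖ l)
    (hlt : w k < w l) (hv : X i * S (w * Equiv.swap k l) =
      ∑ j ∈ bruhatCovers (w * Equiv.swap k l) i, S (w * Equiv.swap k l * Equiv.swap i j)) :
    X i * S w = ∑ j ∈ bruhatCovers w i, S (w * Equiv.swap i j) := by
  have hleft : IsDivDiff k l (X i * S (w * Equiv.swap k l)) (X i * S w) :=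
    (hS.isDivDiff w k l hkl hlt).X_mul hik.ne (hik.trans hkl.lt).ne
  have hconj (j : Fin n) : Equiv.swap k l * Equiv.swap i j =
      Equiv.swap i (Equiv.swap k l j) * Equiv.swap k l := by
    rw [Equiv.mul_swap_eq_swap_mul,
      Equiv.swap_apply_of_ne_of_ne hik.ne (hik.trans hkl.lt).ne]
  rw [← sum_bruhatCovers_mul_swap _ hik hkl hlt]
  refine hleft.unique (hv ▸ IsDivDiff.sum fun j _ => ?_) hkl.lt.ne
  rw [mul_assoc, hconj, ← mul_assoc]
  exact hS.isDivDiff_mul_swap hkl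

theorem isDivDiff_X_mul_mul_swap (hS : IsSchubertFamily S) (hil : i ⋖ l)
    (hmax : ∀ x, l < x → w x < w l) (hv : w * Equiv.swap i l = Fin.revPerm ∨
      X l * S (w * Equiv.swap i l) = ∑ j ∈ bruhatCovers (w * Equiv.swap i l) l,
        S (w * Equiv.swap i l * Equiv.swap l j)) :
    IsDivDiff i l (X l * S (w * Equiv.swap i l))
      (∑ j ∈ bruhatCovers (w * Equiv.swap i l) l, S (w * Equiv.swap i j)) := by
  rcases hv with hv | hv
  · have hempty : bruhatCovers Fin.revPerm l = ∅ := by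
      refine eq_empty_of_forall_notMem fun j hj => ?_
      rw [mem_bruhatCovers] at hj
      exact (Fin.rev_lt_rev.mpr hj.1).asymm hj.2.1
    rw [hv, hempty, sum_empty]
    exact hS.isDivDiff_X_mul_revPerm hil
  · rw [hv]
    refine IsDivDiff.sum fun j hj => ?_
    have hlj : l < j := (mem_bruhatCovers.mp hj).1
    have hij : i < j := hil.lt.trans hlj
    have hconj : Equiv.swap i l * Equiv.swap l j = Equiv.swap i j * Equiv.swap i l := by
      rw [Equiv.mul_swap_eq_swap_mul, Equiv.swap_apply_right,
        Equiv.swap_apply_of_ne_of_ne hij.ne' hlj.ne']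
    rw [mul_assoc, hconj, ← mul_assoc]
    refine hS.isDivDiff _ i l hil ?_
    simpa [Equiv.swap_apply_of_ne_of_ne hil.lt.ne' hlj.ne] using hmax j hlj

theorem X_mul_eq_sum_bruhatCovers_of_covBy (hS : IsSchubertFamily S) (hil : i ⋖ l) (hlt : w i < w l)
    (hmax : ∀ x, l < x → w x < w l) (hv : w * Equiv.swap i l = Fin.revPerm ∨
      X l * S (w * Equiv.swap i l) = ∑ j ∈ bruhatCovers (w * Equiv.swap i l) l,
        S (w * Equiv.swap i l * Equiv.swap l j)) :
    X i * S w = ∑ j ∈ bruhatCovers w i, S (w * Equiv.swap i j) := by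
  have hleft : IsDivDiff i l (X l * S (w * Equiv.swap i l))
      (X i * S w - S (w * Equiv.swap i l)) := (hS.isDivDiff w i l hil hlt).X_right_mul
  have hnotMem : l ∉ bruhatCovers (w * Equiv.swap i l) l := fun h =>
    (mem_bruhatCovers.mp h).1.false
  rw [bruhatCovers_eq_insert hil hlt hmax, sum_insert hnotMem, ← sub_eq_iff_eq_add']
  exact hleft.unique (hS.isDivDiff_X_mul_mul_swap hil hmax hv) hil.lt.ne

/-- Knutson's cotransition formula. -/
theorem X_mul_eq_sum_bruhatCovers (hS : IsSchubertFamily S) (hw : IsReversedBefore w i)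
    (hi : ∃ j, i < j ∧ w i < w j) :
    X i * S w = ∑ j ∈ bruhatCovers w i, S (w * Equiv.swap i j) := by
  induction w using mul_swap_induction generalizing i with | h w ih
  obtain ⟨j, hij, hwij⟩ := hi
  by_cases hasc : ∃ k l, i < k ∧ k ⋖ l ∧ w k < w l
  · obtain ⟨k, l, hik, hkl, hlt⟩ := hasc
    have hil : i < l := hik.trans hkl.lt
    have hfix : Equiv.swap k l i = i := Equiv.swap_apply_of_ne_of_ne hik.ne hil.ne
    refine hS.X_mul_eq_sum_bruhatCovers_of_lt hik hkl hlt (ih k l hkl.lt hlt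
      (hw.mul_swap hik.le hil.le) ⟨Equiv.swap k l j, ?_, by simpa [hfix] using hwij⟩)
    rw [Equiv.swap_apply_def]
    split_ifs <;> assumption
  · have hanti : StrictAntiOn w (Set.Ioi i) := by
      refine strictAntiOn_of_succ_lt Set.ordConnected_Ioi fun k hk hik _ => ?_
      have hkl : k ⋖ Order.succ k := Order.covBy_succ_of_not_isMax hk
      exact lt_of_not_ge fun hle =>
        hasc ⟨k, Order.succ k, hik, hkl, hle.lt_of_ne (w.injective.ne hkl.lt.ne)⟩
    obtain ⟨l, hil, hlj⟩ := exists_covBy_le_of_lt hij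
    have hmax : ∀ x, l < x → w x < w l := fun x hx => hanti hil.lt (hil.lt.trans hx) hx
    have hlt : w i < w l := hwij.trans_le (hanti.antitoneOn hil.lt hij hlj)
    have hv : IsReversedBefore (w * Equiv.swap i l) l := hw.mul_swap_of_covBy hil hlt hmax
    refine hS.X_mul_eq_sum_bruhatCovers_of_covBy hil hlt hmax ?_
    by_cases hl : ∃ j, l < j ∧ (w * Equiv.swap i l) l < (w * Equiv.swap i l) j
    · exact .inr (ih i l hil.lt hlt hv hl)
    · push Not at hl
      refine .inl (eq_revPerm_of_strictAnti fun a b hab => ?_)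
      rcases lt_trichotomy a l with ha | rfl | ha
      · exact hv a ha b hab
      · exact (hl b hab).lt_of_ne (Equiv.injective _ |>.ne hab.ne')
      · have hfix {x : Fin n} (hx : l < x) : Equiv.swap i l x = x :=
          Equiv.swap_apply_of_ne_of_ne (hil.lt.trans hx).ne' hx.ne'
        simpa [hfix ha, hfix (ha.trans hab)] using
          hanti (hil.lt.trans ha) (hil.lt.trans (ha.trans hab)) hab

theorem coeff_eq_sum (hS : IsSchubertFamily S) (hw : IsReversedBefore w i)
    (hi : ∃ j, i < j ∧ w i < w j) (d : Fin n →₀ ℕ) :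
    (S w).coeff d =
      ∑ j ∈ bruhatCovers w i, (S (w * Equiv.swap i j)).coeff (Finsupp.single i 1 + d) := by
  rw [← coeff_X_mul d i, hS.X_mul_eq_sum_bruhatCovers hw hi, coeff_sum]

theorem revPerm_eq_monomial (hS : IsSchubertFamily S) :
    S Fin.revPerm = monomial (expVec (rotheCol (Fin.revPerm (n := n)))) 1 := by
  have hcard (i : Fin n) : expVec (rotheCol Fin.revPerm) i = n - 1 - (i : ℕ) := by
    rw [expVec_apply, ← Fin.card_Ioi]
    congr 1
    ext m
    simp [mem_rotheCol]
  rw [hS.revPerm, monomial_eq, C_1, one_mul, Finsupp.prod_fintype _ _ fun _ => pow_zero _]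
  simp_rw [hcard]

theorem coeff_nonneg (hS : IsSchubertFamily S) (w : Equiv.Perm (Fin n)) (d : Fin n →₀ ℕ) :
    0 ≤ (S w).coeff d := by
  induction w using bruhatCovers_induction generalizing d with
  | revPerm =>
    rw [hS.revPerm_eq_monomial, coeff_monomial]
    split_ifs <;> simp
  | step w i hw hi ih =>
    rw [hS.coeff_eq_sum hw hi]
    exact sum_nonneg fun j hj => ih j hj _

theorem exists_expVec_eq_of_mem_support (hS : IsSchubertFamily S) {d : Fin n →₀ ℕ}
    (hd : d ∈ (S w).support) :
    ∃ B : Fin n → Finset (Fin n), (∀ m, DomLE (B m) (rotheCol w m)) ∧ expVec B = d := by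
  induction w using bruhatCovers_induction generalizing d with
  | revPerm =>
    rw [hS.revPerm_eq_monomial] at hd
    exact ⟨rotheCol Fin.revPerm, fun m => .refl _,
      (mem_singleton.mp (support_monomial_subset hd)).symm⟩
  | step w i hw hi ih =>
    rw [mem_support_iff, hS.coeff_eq_sum hw hi] at hd
    obtain ⟨j, hj, hne⟩ := exists_ne_zero_of_sum_ne_zero hd
    obtain ⟨B, hB, hBd⟩ := ih j hj (mem_support_iff.mpr hne)
    obtain ⟨hiB, hB'⟩ := hw.domLE_update_erase hj hB
    refine ⟨_, hB', ?_⟩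
    rwa [expVec_eq_single_add_update_erase hiB, add_right_inj] at hBd

theorem expVec_mem_support {Γ : Type*} [AddCommMonoid Γ] [LinearOrder Γ]
    [IsOrderedCancelAddMonoid Γ] {v : Fin n → Γ} (hS : IsSchubertFamily S) (hv : v.Injective)
    {B : Fin n → Finset (Fin n)} (hB : ∀ m, IsOptimalBasis v (rotheCol w m) (B m)) :
    expVec B ∈ (S w).support := by
  induction w using bruhatCovers_induction generalizing B with
  | revPerm =>
    have hBeq : B = rotheCol Fin.revPerm := funext fun m =>
      (hB m).1.eq_of_isLowerSet (isLowerSet_rotheCol_revPerm m)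
    rw [hBeq, hS.revPerm_eq_monomial, mem_support_iff, coeff_monomial, if_pos rfl]
    exact one_ne_zero
  | step w i hw hi ih =>
    obtain ⟨j, hj, hiB, hB'⟩ := hw.exists_isOptimalBasis_update hi hv hB
    have hmem := mem_support_iff.mp (ih j hj hB')
    rw [expVec_update_insert hiB] at hmem
    rw [mem_support_iff, hS.coeff_eq_sum hw hi]
    refine (sum_pos' (fun k _ => hS.coeff_nonneg _ _) ⟨j, hj, ?_⟩).ne'
    exact (hS.coeff_nonneg _ _).lt_of_ne' hmem

end IsSchubertFamily

end Schubert

section Polytope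

variable {n : ℕ}

theorem colSet_rothe (w : Equiv.Perm (Fin n)) (m : Fin n) :
    colSet (rothe w) (w m) = rotheCol w m := by
  ext k
  simp [colSet, rothe, mem_rotheCol, and_comm]

theorem indVec_eq_sum_single (B : Finset (Fin n)) : indVec B = ∑ x ∈ B, Pi.single x (1 : ℝ) := by
  ext y
  simp [indVec, Finset.sum_apply, Pi.single_apply]

theorem coe_expVec {ι : Type*} [Fintype ι] (B : ι → Finset (Fin n)) :
    (fun x => (expVec B x : ℝ)) = ∑ c, indVec (B c) := by
  ext x
  simp [expVec_apply, indVec, Finset.sum_apply]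

/-- The weight of `x` under the linear functional `f`, with ties broken by position so that
distinct elements have distinct weights. -/
def lexWeight (f : (Fin n → ℝ) →L[ℝ] ℝ) (x : Fin n) : ℝ ×ₗ ℕ :=
  toLex (f (Pi.single x 1), (x : ℕ))

theorem lexWeight_injective (f : (Fin n → ℝ) →L[ℝ] ℝ) : (lexWeight f).Injective := fun _ _ h =>
  Fin.ext (congrArg (fun p => (ofLex p).2) h)

theorem IsOptimalBasis.le_apply_indVec {f : (Fin n → ℝ) →L[ℝ] ℝ} {S B : Finset (Fin n)}
    (hB : IsOptimalBasis (lexWeight f) S B) {q : Fin n → ℝ} (hq : q ∈ smPolytope S) :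
    f q ≤ f (indVec B) := by
  have hfst (A : Finset (Fin n)) : (ofLex (∑ x ∈ A, lexWeight f x)).1 = f (indVec A) := by
    rw [indVec_eq_sum_single, map_sum f]
    exact map_sum (OrderAddMonoidHom.fstₗ ℝ ℕ) _ _
  refine convexHull_min ?_ (convex_halfSpace_le f.toLinearMap.isLinear (f (indVec B))) hq
  rintro _ ⟨A, hA, rfl⟩
  have hle := Prod.Lex.monotone_fst_ofLex (hB.2 A hA)
  simp only [hfst] at hle
  exact hle

theorem sum_smPolytope_subset {ι : Type*} [Fintype ι] {S : ι → Finset (Fin n)}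
    {K : Set (Fin n → ℝ)} (hK : Convex ℝ K) (hKc : IsClosed K)
    (h : ∀ (f : (Fin n → ℝ) →L[ℝ] ℝ) (B : ι → Finset (Fin n)),
      (∀ c, IsOptimalBasis (lexWeight f) (S c) (B c)) → ∑ c, indVec (B c) ∈ K) :
    ∑ c, smPolytope (S c) ⊆ K := by
  intro q hq
  by_contra hqK
  obtain ⟨f, u, hlt_u, hu_lt⟩ := geometric_hahn_banach_closed_point hK hKc hqK
  choose B hB using fun c => exists_isOptimalBasis (lexWeight f) (S c)
  obtain ⟨p, hp, rfl⟩ := (Set.mem_finsetSum _ _ _).mp hq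
  have hle : f (∑ c, p c) ≤ f (∑ c, indVec (B c)) := by
    rw [map_sum, map_sum]
    exact sum_le_sum fun c _ => (hB c).le_apply_indVec (hp (mem_univ c))
  exact (hu_lt.trans_le hle).asymm (hlt_u _ (h f B hB))

theorem convex_sum_smPolytope {ι : Type*} [Fintype ι] (S : ι → Finset (Fin n)) :
    Convex ℝ (∑ c, smPolytope (S c)) := by
  simp_rw [smPolytope, ← convexHull_sum]
  exact convex_convexHull ℝ _

theorem sum_indVec_mem {ι : Type*} [Fintype ι] {S B : ι → Finset (Fin n)}
    (hB : ∀ c, DomLE (B c) (S c)) : ∑ c, indVec (B c) ∈ ∑ c, smPolytope (S c) :=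
  Set.finsetSum_mem_finsetSum _ _ _ fun c _ => subset_convexHull ℝ _ ⟨B c, hB c, rfl⟩

theorem newtonPolytope_eq_sum_smPolytope {ι : Type*} [Fintype ι] {p : MvPolynomial (Fin n) ℤ}
    {S : ι → Finset (Fin n)}
    (hsupp : ∀ d ∈ p.support, ∃ B, (∀ c, DomLE (B c) (S c)) ∧ expVec B = d)
    (hopt : ∀ (f : (Fin n → ℝ) →L[ℝ] ℝ) (B : ι → Finset (Fin n)),
      (∀ c, IsOptimalBasis (lexWeight f) (S c) (B c)) → expVec B ∈ p.support) :
    newtonPolytope p = ∑ c, smPolytope (S c) := by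
  refine (convexHull_min ?_ (convex_sum_smPolytope S)).antisymm
    (sum_smPolytope_subset (convex_convexHull ℝ _)
      ((p.support.finite_toSet.image _).isClosed_convexHull ℝ) fun f B hB => ?_)
  · rintro _ ⟨d, hd, rfl⟩
    obtain ⟨B, hB, rfl⟩ := hsupp d hd
    change (fun x => (expVec B x : ℝ)) ∈ _
    exact coe_expVec B ▸ sum_indVec_mem hB
  · rw [← coe_expVec]
    exact subset_convexHull ℝ _ ⟨expVec B, hopt f B hB, rfl⟩

end Polytope

/-- The Newton polytope of the Schubert polynomial `𝔖_w` equals the Minkowski sum of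
Schubert matroid polytopes `Σ_{j=1}^n P(SM_n(D(w)_j))` of the columns of the Rothe
diagram of `w`. -/
theorem stmt9 (n : ℕ) (Schub : Equiv.Perm (Fin n) → MvPolynomial (Fin n) ℤ)
    -- `𝔖_{w₀} = x_1^{n-1} x_2^{n-2} ⋯ x_{n-1}` for the longest permutation `w₀`.
    (hbase : Schub Fin.revPerm = ∏ i : Fin n, X i ^ (n - 1 - (i : ℕ)))
    -- For adjacent positions `i, j = i+1` with `w(i) < w(j)`: `𝔖_w = ∂_i 𝔖_{w sᵢ}`, i.e.
    -- `(xᵢ - xⱼ) ⬝ 𝔖_w = 𝔖_{w sᵢ} - sᵢ ⬝ 𝔖_{w sᵢ}`.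
    (hrec : ∀ (w : Equiv.Perm (Fin n)) (i j : Fin n), (i : ℕ) + 1 = (j : ℕ) → w i < w j →
      (X i - X j) * Schub w =
        Schub (w * Equiv.swap i j) -
          rename (Equiv.swap i j) (Schub (w * Equiv.swap i j)))
    (w : Equiv.Perm (Fin n)) :
    newtonPolytope (Schub w) = ∑ j : Fin n, smPolytope (colSet (rothe w) j) := by
  have hS : IsSchubertFamily Schub :=
    ⟨hbase, fun w i j hij => hrec w i j (Nat.covBy_iff_add_one_eq.mp (Fin.covBy_iff.mp hij))⟩
  have hcol : ∑ j, smPolytope (colSet (rothe w) j) = ∑ m, smPolytope (rotheCol w m) := by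
    rw [← Equiv.sum_comp w]
    simp_rw [colSet_rothe]
  rw [hcol]
  exact newtonPolytope_eq_sum_smPolytope
    (fun d hd => hS.exists_expVec_eq_of_mem_support hd)
    (fun f B hB => hS.expVec_mem_support (lexWeight_injective f) hB)
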